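/- For every real ε > 0 there exists k₀ = k₀(ε) such that for every integer k ≥ k₀, every real r with 0 < r ≤ 2^(k-1)·ln 2 − (ln 2)/2 − 1/2 − ε, and every α ∈ (0.9, 1], one has g_r(α) < g_r(1/2). -/

import Mathlib

/-- The correlation function for NAE `k`-SAT:
`f_N(α) = 1 - 2^(2-k) + 2^(1-k) (α^k + (1-α)^k)`. -/
noncomputable def fN (k : ℕ) (α : ℝ) : ℝ :=
  1 - (2 : ℝ) ^ ((2 : ℤ) - k) + (2 : ℝ) ^ ((1 : ℤ) - k) * (α ^ k + (1 - α) ^ k)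

/-- `g_r(α) = f_N(α)^r / (α^α (1-α)^(1-α))`, with the `0^0 = 1` convention of
`Real.rpow` at the endpoints. -/
noncomputable def gr (k : ℕ) (r : ℝ) (α : ℝ) : ℝ :=
  fN k α ^ r / (α ^ α * (1 - α) ^ (1 - α))

/-!
Write `v = 2^(1-k)` and `s(α) = 1 - α^k - (1-α)^k`, so that `f_N = 1 - v - v s` and
`log g_r = r log f_N + H` with `H` the binary entropy. Expanding `log (1 - v)` to second order,
the claim reduces to `H(δ) ≤ m s(δ) + (1 + ε) 2^(-k)` for `δ = 1 - α`, where
`m = log 2 - ((log 2 + 1)/2 + ε) v` is `v` times the maximal density `r`.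

Bernoulli's inequality gives `s(δ) ≥ kδ/(1 + kδ) - δ^k`, and three ranges of `δ` remain.
For `δ ≤ l/k²` the tangent line of the entropy at `(1 + ε) 2^(-k)` has slope
`k log 2 - log (1 + ε)`, so `m s(δ) ≈ k δ log 2` just compensates for it; here the term `1/2` of
the density bound is needed. For `l/k² ≤ δ ≤ C/k` the entropy is `O(δ log k)` while `s(δ)` is of
order `k δ`. For `C/k ≤ δ ≤ b < 1/2` the entropy is at most `H(b) < log 2` while `m s(δ)` is close
to `log 2` once `C` is large.
-/

open Real Set Filter Topology

section Entropy

lemma negMulLog_le_sub_mul_log {x A : ℝ} (hx : 0 ≤ x) (hA : 0 < A) :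
    negMulLog x ≤ A - x - x * log A := by
  have scaled : A * negMulLog (x / A) ≤ A * (1 - x / A) :=
    mul_le_mul_of_nonneg_left (negMulLog_le_one_sub_self (by positivity)) hA.le
  calc negMulLog x = negMulLog (A * (x / A)) := by rw [mul_div_cancel₀ _ hA.ne']
    _ = x / A * negMulLog A + A * negMulLog (x / A) := negMulLog_mul _ _
    _ ≤ x / A * negMulLog A + A * (1 - x / A) := by gcongr
    _ = A - x - x * log A := by rw [negMulLog]; field_simp; ring

lemma binEntropy_le_sub_mul_log {p A : ℝ} (hp₀ : 0 ≤ p) (hp₁ : p ≤ 1) (hA : 0 < A) :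
    binEntropy p ≤ A - p * log A := by
  rw [binEntropy_eq_negMulLog_add_negMulLog_one_sub]
  linarith [negMulLog_le_sub_mul_log hp₀ hA, negMulLog_le_one_sub_self (sub_nonneg.2 hp₁)]

lemma rpow_self_eq_exp_neg_negMulLog {x : ℝ} (hx : 0 ≤ x) : x ^ x = exp (-negMulLog x) := by
  rcases hx.eq_or_lt with rfl | hpos
  · simp
  · rw [rpow_def_of_pos hpos, negMulLog]
    ring_nf

lemma neg_log_one_sub_le {x : ℝ} (hx₀ : 0 ≤ x) (hx : x ≤ 1 / 2) :
    -log (1 - x) ≤ x + x ^ 2 / 2 + 2 * x ^ 3 := by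
  have taylor := abs_log_sub_add_sum_range_le (x := x) (by rw [abs_of_nonneg hx₀]; linarith) 2
  rw [abs_of_nonneg hx₀] at taylor
  have remainder : x ^ 3 / (1 - x) ≤ 2 * x ^ 3 := by
    rw [div_le_iff₀ (by linarith)]
    nlinarith [pow_nonneg hx₀ 3]
  have lower := (abs_le.1 taylor).1
  norm_num [Finset.sum_range_succ] at lower
  linarith

end Entropy

section Separation

/-- The probability that a uniformly random NAE `k`-clause is violated by a given assignment. -/
noncomputable def violationProb (k : ℕ) : ℝ := 2 ^ ((1 : ℤ) - k)

/-- The probability that two assignments agreeing on a fraction `α` of the variables neither agree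
everywhere nor disagree everywhere on `k` independent random variables. It is the part of `fN`
which depends on `α`, see `fN_eq`. -/
noncomputable def separationProb (k : ℕ) (α : ℝ) : ℝ := 1 - (α ^ k + (1 - α) ^ k)

lemma violationProb_eq (k : ℕ) : violationProb k = 2 * (1 / 2) ^ k := by
  rw [violationProb, zpow_sub₀ two_ne_zero, zpow_natCast, zpow_one, one_div, inv_pow,
    div_eq_mul_inv]

lemma violationProb_pos (k : ℕ) : 0 < violationProb k := zpow_pos two_pos _

lemma tendsto_violationProb : Tendsto violationProb atTop (𝓝 0) := by
  have h := (tendsto_pow_atTop_nhds_zero_of_lt_one (r := (1 / 2 : ℝ)) (by norm_num)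
    (by norm_num)).const_mul 2
  rw [mul_zero] at h
  exact h.congr fun k ↦ (violationProb_eq k).symm

lemma tendsto_natCast_mul_violationProb :
    Tendsto (fun k : ℕ ↦ k * violationProb k) atTop (𝓝 0) := by
  have h := (tendsto_self_mul_const_pow_of_lt_one (r := (1 / 2 : ℝ)) (by norm_num)
    (by norm_num)).const_mul 2
  rw [mul_zero] at h
  exact h.congr fun k ↦ by rw [violationProb_eq]; ring

lemma separationProb_one_sub (k : ℕ) (α : ℝ) : separationProb k (1 - α) = separationProb k α := by
  rw [separationProb, separationProb, sub_sub_cancel, add_comm]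

lemma separationProb_half (k : ℕ) : separationProb k (1 / 2) = 1 - violationProb k := by
  rw [separationProb, violationProb_eq, sub_half]
  ring

lemma separationProb_nonneg {k : ℕ} (hk : k ≠ 0) {α : ℝ} (hα : α ∈ Icc 0 1) :
    0 ≤ separationProb k α := by
  have h₁ := pow_le_of_le_one hα.1 hα.2 hk
  have h₂ := pow_le_of_le_one (sub_nonneg.2 hα.2) (sub_le_self 1 hα.1) hk
  rw [separationProb]
  linarith

lemma separationProb_le_half (k : ℕ) {α : ℝ} (hα : α ∈ Icc 0 1) :
    separationProb k α ≤ separationProb k (1 / 2) := by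
  have convexity := (convexOn_pow (𝕜 := ℝ) k).2 hα.1 (sub_nonneg.2 hα.2)
    one_half_pos.le one_half_pos.le (add_halves 1)
  simp only [smul_eq_mul] at convexity
  rw [show 1 / 2 * α + 1 / 2 * (1 - α) = (1 / 2 : ℝ) by ring] at convexity
  rw [separationProb, separationProb, sub_half]
  linarith

lemma one_sub_pow_le_inv_one_add_mul {δ : ℝ} (hδ : δ ∈ Icc 0 1) (k : ℕ) :
    (1 - δ) ^ k ≤ (1 + k * δ)⁻¹ := by
  have hδ₀ := hδ.1
  have hpow : 0 ≤ (1 - δ) ^ k := pow_nonneg (sub_nonneg.2 hδ.2) k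
  rw [← one_div, le_div_iff₀ (by positivity)]
  calc (1 - δ) ^ k * (1 + k * δ) ≤ (1 - δ) ^ k * (1 + δ) ^ k :=
        mul_le_mul_of_nonneg_left (one_add_mul_le_pow (by linarith) k) hpow
    _ = (1 - δ ^ 2) ^ k := by rw [← mul_pow]; ring
    _ ≤ 1 := pow_le_one₀ (sub_nonneg.2 (pow_le_one₀ hδ₀ hδ.2)) (sub_le_self 1 (sq_nonneg δ))

lemma le_separationProb {δ : ℝ} (hδ : δ ∈ Icc 0 1) (k : ℕ) :
    k * δ / (1 + k * δ) - δ ^ k ≤ separationProb k δ := by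
  have hδ₀ := hδ.1
  have h : k * δ / (1 + k * δ) = 1 - (1 + k * δ)⁻¹ := by field_simp; ring
  rw [separationProb, h]
  linarith [one_sub_pow_le_inv_one_add_mul hδ k]

end Separation

section EntropyVersusSeparation

variable {m : ℕ → ℝ}

lemma tendsto_of_tendsto_natCast_mul_sub {L : ℝ}
    (hm : Tendsto (fun k : ℕ ↦ k * (L - m k)) atTop (𝓝 0)) : Tendsto m atTop (𝓝 L) := by
  have h := (hm.mul (tendsto_inv_atTop_nhds_zero_nat (𝕜 := ℝ))).const_sub L
  rw [mul_zero, sub_zero] at h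
  refine h.congr' ?_
  filter_upwards [eventually_ne_atTop 0] with k hk
  field_simp
  ring

lemma eventually_one_sub_log_div_sq_le {l c : ℝ} (hl : 0 < l) (hc : 0 < c) :
    ∀ᶠ k : ℕ in atTop, 1 - log (l / k ^ 2) ≤ c * k := by
  have log_le : ∀ᶠ k : ℕ in atTop, log k ≤ c / 4 * k := by
    filter_upwards [(isLittleO_log_id_atTop.comp_tendsto
      (tendsto_natCast_atTop_atTop (R := ℝ))).bound (by positivity : 0 < c / 4)] with k hk
    simpa using (le_abs_self _).trans hk
  have const_le : ∀ᶠ k : ℕ in atTop, (1 - log l) / (c / 2) ≤ k :=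
    tendsto_natCast_atTop_atTop.eventually_ge_atTop _
  filter_upwards [log_le, const_le, eventually_ne_atTop 0] with k hlog hconst hk
  rw [div_le_iff₀ (by positivity)] at hconst
  rw [log_div hl.ne' (by positivity), log_pow]
  push_cast
  linarith

lemma eventually_binEntropy_le_of_le_div_sq {ε : ℝ} (hε : 0 < ε)
    (hm : Tendsto (fun k : ℕ ↦ k * (log 2 - m k)) atTop (𝓝 0)) :
    ∀ᶠ k : ℕ in atTop, ∀ δ : ℝ, 0 ≤ δ → δ ≤ log (1 + ε) / 4 / k ^ 2 → δ ≤ 1 →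
      binEntropy δ ≤ m k * separationProb k δ + (1 + ε) * (1 / 2) ^ k := by
  have hlog : 0 < log (1 + ε) := log_pos (by linarith)
  have hm_lim := tendsto_of_tendsto_natCast_mul_sub hm
  filter_upwards [hm.eventually_le_const (half_pos hlog),
    hm_lim.eventually_le_const (log_two_lt_d9.trans (by norm_num : _ < (1 : ℝ))),
    hm_lim.eventually_const_le (log_pos one_lt_two), eventually_ge_atTop 2]
    with k hmk hm₁ hm₀ hk δ hδ₀ hδ hδ₁
  have hkR : (1 : ℝ) ≤ k := by exact_mod_cast one_le_two.trans hk
  have tangent : binEntropy δ ≤ (1 + ε) * (1 / 2) ^ k + k * δ * log 2 - δ * log (1 + ε) := by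
    have h := binEntropy_le_sub_mul_log hδ₀ hδ₁ (A := (1 + ε) * (1 / 2) ^ k) (by positivity)
    rw [log_mul (by positivity) (by positivity), log_pow, one_div, log_inv] at h
    rw [one_div]
    linarith
  have sep_ge : k * δ - 2 * (k * δ) ^ 2 ≤ separationProb k δ := by
    have main_term : k * δ - (k * δ) ^ 2 ≤ k * δ / (1 + k * δ) := by
      rw [le_div_iff₀ (by positivity)]
      nlinarith [pow_nonneg (mul_nonneg (zero_le_one.trans hkR) hδ₀) 3]
    have pow_term : δ ^ k ≤ (k * δ) ^ 2 :=
      (pow_le_pow_of_le_one hδ₀ hδ₁ hk).trans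
        (pow_le_pow_left₀ hδ₀ (le_mul_of_one_le_left hδ₀ hkR) 2)
    linarith [le_separationProb ⟨hδ₀, hδ₁⟩ k]
  have quadratic : 2 * (k * δ) ^ 2 ≤ δ * (log (1 + ε) / 2) := by
    rw [le_div_iff₀ (by positivity)] at hδ
    nlinarith [mul_le_mul_of_nonneg_left hδ hδ₀]
  have defect : δ * (k * (log 2 - m k)) ≤ δ * (log (1 + ε) / 2) :=
    mul_le_mul_of_nonneg_left hmk hδ₀
  have sep_term : m k * (k * δ - 2 * (k * δ) ^ 2) ≤ m k * separationProb k δ :=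
    mul_le_mul_of_nonneg_left sep_ge hm₀
  have quadratic_term : m k * (2 * (k * δ) ^ 2) ≤ 2 * (k * δ) ^ 2 :=
    mul_le_of_le_one_left (by positivity) hm₁
  linarith

lemma eventually_binEntropy_le_of_div_sq_le_of_le_div {L l C : ℝ} (hL : 0 < L) (hl : 0 < l)
    (hC : 0 < C) (hm : Tendsto m atTop (𝓝 L)) :
    ∀ᶠ k : ℕ in atTop, ∀ δ : ℝ, l / k ^ 2 ≤ δ → δ ≤ C / k →
      binEntropy δ ≤ m k * separationProb k δ := by
  set c := 1 / (2 * (1 + C)) with hc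
  filter_upwards [hm.eventually_const_le (half_lt_self hL),
    eventually_one_sub_log_div_sq_le hl (by positivity : 0 < L / 2 * c),
    tendsto_natCast_atTop_atTop.eventually_ge_atTop (2 * (1 + C)), eventually_ge_atTop 2]
    with k hmk hlog hkC hk δ hlδ hδC
  have hk₀ : (0 : ℝ) < k := by positivity
  have hδ₀ : 0 < δ := lt_of_lt_of_le (by positivity) hlδ
  have hkδ : k * δ ≤ C := by rwa [le_div_iff₀' hk₀] at hδC
  have hδ₁ : δ ≤ 1 := by nlinarith
  have entropy_le : binEntropy δ ≤ δ * (1 - log (l / k ^ 2)) := by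
    linarith [binEntropy_le_sub_mul_log hδ₀.le hδ₁ (A := l / k ^ 2) (by positivity)]
  have sep_ge : c * (k * δ) ≤ separationProb k δ := by
    have main_term : 2 * c * (k * δ) ≤ k * δ / (1 + k * δ) := by
      rw [show 2 * c * (k * δ) = k * δ / (1 + C) by rw [hc]; field_simp]
      gcongr
    have pow_term : δ ^ k ≤ c * (k * δ) := by
      have hck : 1 ≤ c * k := by
        rw [hc, one_div, inv_mul_eq_div, one_le_div (by positivity)]
        exact hkC
      calc δ ^ k ≤ δ := pow_le_of_le_one hδ₀.le hδ₁ (by positivity)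
        _ ≤ c * k * δ := le_mul_of_one_le_left hδ₀.le hck
        _ = c * (k * δ) := mul_assoc _ _ _
    linarith [le_separationProb ⟨hδ₀.le, hδ₁⟩ k]
  calc binEntropy δ ≤ δ * (1 - log (l / k ^ 2)) := entropy_le
    _ ≤ δ * (L / 2 * c * k) := by gcongr
    _ = L / 2 * (c * (k * δ)) := by ring
    _ ≤ m k * separationProb k δ := by gcongr; linarith

lemma eventually_binEntropy_le_of_div_le {L b C : ℝ} (hb : b ≤ 1 / 2) (hC : 0 < C)
    (hLC : binEntropy b < L * (C / (1 + C))) (hL : 0 < L) (hm : Tendsto m atTop (𝓝 L)) :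
    ∀ᶠ k : ℕ in atTop, ∀ δ : ℝ, C / k ≤ δ → δ ≤ b →
      binEntropy δ ≤ m k * separationProb k δ := by
  have lower_lim : Tendsto (fun k : ℕ ↦ m k * (C / (1 + C) - (1 / 2) ^ k)) atTop
      (𝓝 (L * (C / (1 + C)))) := by
    simpa using hm.mul ((tendsto_pow_atTop_nhds_zero_of_lt_one (r := (1 / 2 : ℝ)) (by norm_num)
      (by norm_num)).const_sub (C / (1 + C)))
  filter_upwards [lower_lim.eventually_const_le hLC, hm.eventually_const_le hL,
    eventually_gt_atTop 0] with k hlower hm₀ hk δ hCδ hδb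
  have hk₀ : (0 : ℝ) < k := by positivity
  have hδ₀ : 0 ≤ δ := le_trans (by positivity) hCδ
  have hkδ : C ≤ k * δ := by rwa [div_le_iff₀' hk₀] at hCδ
  have sep_ge : C / (1 + C) - (1 / 2) ^ k ≤ separationProb k δ := by
    have main_term : C / (1 + C) ≤ k * δ / (1 + k * δ) := by
      rw [div_le_div_iff₀ (by positivity) (by positivity)]
      linarith
    have pow_term : δ ^ k ≤ (1 / 2) ^ k := pow_le_pow_left₀ hδ₀ (hδb.trans hb) k
    linarith [le_separationProb ⟨hδ₀, by linarith⟩ k]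
  calc binEntropy δ ≤ binEntropy b := by
        rw [one_div] at hb
        exact binEntropy_strictMonoOn.monotoneOn ⟨hδ₀, hδb.trans hb⟩ ⟨hδ₀.trans hδb, hb⟩ hδb
    _ ≤ m k * (C / (1 + C) - (1 / 2) ^ k) := hlower
    _ ≤ m k * separationProb k δ := mul_le_mul_of_nonneg_left sep_ge hm₀

lemma exists_lt_mul_div_one_add {x L : ℝ} (hL : 0 < L) (hx : x < L) :
    ∃ C > 0, x < L * (C / (1 + C)) := by
  have hgap : 0 < L - x := sub_pos.2 hx
  refine ⟨L / (L - x), by positivity, ?_⟩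
  have hden : 0 < L - x + L := by positivity
  rw [show L * (L / (L - x) / (1 + L / (L - x))) = L ^ 2 / (L - x + L) by field_simp,
    lt_div_iff₀ hden]
  nlinarith

theorem eventually_binEntropy_le_mul_separationProb_add {ε b : ℝ} (hε : 0 < ε) (hb : b < 1 / 2)
    (hm : Tendsto (fun k : ℕ ↦ k * (log 2 - m k)) atTop (𝓝 0)) :
    ∀ᶠ k : ℕ in atTop, ∀ δ ∈ Icc 0 b,
      binEntropy δ ≤ m k * separationProb k δ + (1 + ε) * (1 / 2) ^ k := by
  have hlog2 : 0 < log 2 := log_pos one_lt_two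
  have hm_lim := tendsto_of_tendsto_natCast_mul_sub hm
  have hHb : binEntropy b < log 2 := binEntropy_lt_log_two.2 (by rw [← one_div]; exact hb.ne)
  obtain ⟨C, hC, hbC⟩ := exists_lt_mul_div_one_add hlog2 hHb
  have hl : 0 < log (1 + ε) / 4 := div_pos (log_pos (by linarith)) four_pos
  filter_upwards [eventually_binEntropy_le_of_le_div_sq hε hm,
    eventually_binEntropy_le_of_div_sq_le_of_le_div hlog2 hl hC hm_lim,
    eventually_binEntropy_le_of_div_le hb.le hC hbC hlog2 hm_lim] with k small middle large δ hδ
  have error_nonneg : 0 ≤ (1 + ε) * (1 / 2) ^ k := by positivity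
  rcases le_total δ (log (1 + ε) / 4 / k ^ 2) with hsmall | hδl
  · exact small δ hδ.1 hsmall (by linarith [hδ.2])
  · rcases le_total δ (C / k) with hmiddle | hlarge
    · linarith [middle δ hδl hmiddle]
    · linarith [large δ hlarge hδ.2]

end EntropyVersusSeparation

section SecondMoment

lemma fN_eq (k : ℕ) (α : ℝ) :
    fN k α = 1 - violationProb k - violationProb k * separationProb k α := by
  have h : (2 : ℝ) ^ ((2 : ℤ) - k) = 2 * violationProb k := by
    rw [violationProb, ← zpow_one_add₀ two_ne_zero]
    ring_nf
  rw [fN, h, separationProb, violationProb]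
  ring

lemma fN_half (k : ℕ) : fN k (1 / 2) = (1 - violationProb k) ^ 2 := by
  rw [fN_eq, separationProb_half]
  ring

lemma fN_half_le (k : ℕ) {α : ℝ} (hα : α ∈ Icc 0 1) : fN k (1 / 2) ≤ fN k α := by
  rw [fN_eq, fN_eq]
  gcongr
  exacts [(violationProb_pos k).le, separationProb_le_half k hα]

lemma fN_pos {k : ℕ} {α : ℝ} (hα : α ∈ Icc 0 1) (hv : violationProb k < 1) : 0 < fN k α := by
  refine lt_of_lt_of_le ?_ (fN_half_le k hα)
  rw [fN_half]
  exact pow_pos (sub_pos.2 hv) 2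

lemma gr_eq_exp {k : ℕ} {α : ℝ} (r : ℝ) (hα : α ∈ Icc 0 1) (hv : violationProb k < 1) :
    gr k r α = exp (r * log (fN k α) + binEntropy α) := by
  rw [gr, rpow_self_eq_exp_neg_negMulLog hα.1, rpow_self_eq_exp_neg_negMulLog (sub_nonneg.2 hα.2),
    rpow_def_of_pos (fN_pos hα hv), ← exp_add, ← exp_sub,
    binEntropy_eq_negMulLog_add_negMulLog_one_sub]
  ring_nf

lemma gr_half_eq_exp {k : ℕ} (r : ℝ) (hv : violationProb k < 1) :
    gr k r (1 / 2) = exp (r * log (fN k (1 / 2)) + log 2) := by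
  rw [gr_eq_exp r ⟨one_half_pos.le, one_half_lt_one.le⟩ hv, ← binEntropy_two_inv, one_div]

lemma log_fN_le {k : ℕ} {α : ℝ} (hα : α ∈ Icc 0 1) (hv : violationProb k < 1) :
    log (fN k α) ≤ log (1 - violationProb k) - violationProb k * separationProb k α := by
  have hk : k ≠ 0 := by
    rintro rfl
    norm_num [violationProb] at hv
  have hf := fN_pos hα hv
  have hv' : 0 < 1 - violationProb k := sub_pos.2 hv
  have hvs : 0 ≤ violationProb k * separationProb k α :=
    mul_nonneg (violationProb_pos k).le (separationProb_nonneg hk hα)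
  have log_ratio := log_le_sub_one_of_pos (div_pos hf hv')
  have ratio_le : fN k α / (1 - violationProb k) ≤ 1 - violationProb k * separationProb k α := by
    rw [div_le_iff₀ hv', fN_eq]
    nlinarith [violationProb_pos k]
  rw [log_div hf.ne' hv'.ne'] at log_ratio
  linarith

lemma log_fN_sub_log_fN_half_le {k : ℕ} {α : ℝ} (hα : α ∈ Icc 0 1)
    (hv : violationProb k ≤ 1 / 2) :
    log (fN k α) - log (fN k (1 / 2)) ≤ violationProb k *
      (1 + violationProb k / 2 + 2 * violationProb k ^ 2 - separationProb k α) := by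
  rw [fN_half, log_pow]
  push_cast
  linarith [log_fN_le hα (by linarith), neg_log_one_sub_le (violationProb_pos k).le hv]

/-- The density `2^(k-1) log 2 - (log 2)/2 - 1/2 - ε`, below which the second moment method is to
work, multiplied by `violationProb k = 2^(1-k)`. In this scale it converges, to `log 2`. -/
noncomputable def scaledThreshold (ε : ℝ) (k : ℕ) : ℝ :=
  log 2 - (log 2 / 2 + 1 / 2 + ε) * violationProb k

lemma tendsto_natCast_mul_log_two_sub_scaledThreshold (ε : ℝ) :
    Tendsto (fun k : ℕ ↦ k * (log 2 - scaledThreshold ε k)) atTop (𝓝 0) := by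
  have h := tendsto_natCast_mul_violationProb.const_mul (log 2 / 2 + 1 / 2 + ε)
  rw [mul_zero] at h
  exact h.congr fun k ↦ by rw [scaledThreshold]; ring

lemma mul_violationProb_le_scaledThreshold {ε r : ℝ} {k : ℕ}
    (hr : r ≤ 2 ^ ((k : ℤ) - 1) * log 2 - log 2 / 2 - 1 / 2 - ε) :
    r * violationProb k ≤ scaledThreshold ε k := by
  have inverse : (2 : ℝ) ^ ((k : ℤ) - 1) * violationProb k = 1 := by
    rw [violationProb, ← zpow_add₀ two_ne_zero]
    simp
  calc r * violationProb k
      ≤ (2 ^ ((k : ℤ) - 1) * log 2 - log 2 / 2 - 1 / 2 - ε) * violationProb k :=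
        mul_le_mul_of_nonneg_right hr (violationProb_pos k).le
    _ = scaledThreshold ε k := by rw [scaledThreshold]; linear_combination log 2 * inverse

lemma scaledThreshold_mul_lt {ε : ℝ} {k : ℕ} (hvε : violationProb k ≤ ε / 4) :
    scaledThreshold ε k * (1 + violationProb k / 2 + 2 * violationProb k ^ 2)
      < log 2 - (1 + ε) * (violationProb k / 2) := by
  rw [scaledThreshold]
  set v := violationProb k
  have hv₀ : 0 < v := violationProb_pos k
  have hlog : log 2 < 1 := log_two_lt_d9.trans (by norm_num)
  have quadratic_term : 2 * log 2 * v ^ 2 < ε / 2 * v := by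
    calc 2 * log 2 * v ^ 2 < 2 * 1 * v ^ 2 := by gcongr
      _ = 2 * v * v := by ring
      _ ≤ ε / 2 * v := by gcongr; linarith
  have hε : 0 < ε := by linarith
  have product_nonneg : 0 ≤ (log 2 / 2 + 1 / 2 + ε) * v * (v / 2 + 2 * v ^ 2) := by positivity
  linarith

lemma gr_lt_gr_half {ε r : ℝ} {k : ℕ} {α : ℝ} (hα : α ∈ Icc 0 1)
    (hv : violationProb k ≤ 1 / 2) (hvε : violationProb k ≤ ε / 4)
    (hm₀ : 0 ≤ scaledThreshold ε k) (hr : r * violationProb k ≤ scaledThreshold ε k)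
    (hH : binEntropy α ≤
      scaledThreshold ε k * separationProb k α + (1 + ε) * (violationProb k / 2)) :
    gr k r α < gr k r (1 / 2) := by
  have hv₁ : violationProb k < 1 := hv.trans_lt one_half_lt_one
  have hf_half : 0 < fN k (1 / 2) := fN_pos ⟨one_half_pos.le, one_half_lt_one.le⟩ hv₁
  have log_gap_nonneg : 0 ≤ log (fN k α) - log (fN k (1 / 2)) :=
    sub_nonneg.2 (log_le_log hf_half (fN_half_le k hα))
  have log_gap_le := log_fN_sub_log_fN_half_le hα hv
  set v := violationProb k
  set m := scaledThreshold ε k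
  set gap := log (fN k α) - log (fN k (1 / 2))
  have hv₀ : 0 < v := violationProb_pos k
  have weighted_gap : r * gap < log 2 - binEntropy α := by
    calc r * gap = r * v * (gap / v) := by field_simp
      _ ≤ m * (gap / v) := by gcongr
      _ ≤ m * (1 + v / 2 + 2 * v ^ 2 - separationProb k α) := by
        gcongr
        rwa [div_le_iff₀' hv₀]
      _ < log 2 - binEntropy α := by linarith [scaledThreshold_mul_lt hvε]
  rw [gr_eq_exp r hα hv₁, gr_half_eq_exp r hv₁, exp_lt_exp]
  linarith

theorem gr_far_from_half_general {ε a : ℝ} (hε : 0 < ε) (ha : 1 / 2 < a) :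
    ∃ k₀ : ℕ, ∀ k : ℕ, k₀ ≤ k → ∀ r : ℝ,
      r ≤ 2 ^ ((k : ℤ) - 1) * log 2 - log 2 / 2 - 1 / 2 - ε →
      ∀ α ∈ Icc a 1, gr k r α < gr k r (1 / 2) := by
  have threshold_lim := tendsto_natCast_mul_log_two_sub_scaledThreshold ε
  refine eventually_atTop.1 ?_
  filter_upwards [eventually_binEntropy_le_mul_separationProb_add hε
      (by linarith : 1 - a < 1 / 2) threshold_lim,
    (tendsto_of_tendsto_natCast_mul_sub threshold_lim).eventually_const_le (log_pos one_lt_two),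
    tendsto_violationProb.eventually_le_const one_half_pos,
    tendsto_violationProb.eventually_le_const (by positivity : 0 < ε / 4)]
    with k entropy_le hm₀ hv hvε r hr α hα
  have hH := entropy_le (1 - α) ⟨sub_nonneg.2 hα.2, sub_le_sub_left hα.1 1⟩
  rw [binEntropy_one_sub, separationProb_one_sub,
    show (1 / 2 : ℝ) ^ k = violationProb k / 2 by rw [violationProb_eq]; ring] at hH
  exact gr_lt_gr_half ⟨by linarith [hα.1], hα.2⟩ hv hvε hm₀
    (mul_violationProb_le_scaledThreshold hr) hH

end SecondMoment

/-- For every `ε > 0` there is `k₀` such that for all `k ≥ k₀`,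
`0 < r ≤ 2^(k-1) ln 2 - (ln 2)/2 - 1/2 - ε`, and `α ∈ (0.9, 1]`,
one has `g_r(α) < g_r(1/2)`. -/
theorem gr_far_from_half (ε : ℝ) (hε : 0 < ε) :
    ∃ k₀ : ℕ, ∀ k : ℕ, k₀ ≤ k → ∀ r : ℝ, 0 < r →
      r ≤ (2 : ℝ) ^ ((k : ℤ) - 1) * Real.log 2 - Real.log 2 / 2 - 1 / 2 - ε →
      ∀ α ∈ Set.Ioc (0.9 : ℝ) 1, gr k r α < gr k r (1 / 2) := by
  obtain ⟨k₀, h⟩ := gr_far_from_half_general hε (by norm_num : (1 / 2 : ℝ) < 0.9)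
  exact ⟨k₀, fun k hk r _ hr α hα ↦ h k hk r hr α (Ioc_subset_Icc_self hα)⟩
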